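/- (Ljusternik–Schnirelman principle, behaviour of the critical levels.) Let X be a reflexive real Banach space and F, G : X → ℝ functionals satisfying: (F1) F and G are even, of class C¹, and F(0) = G(0) = 0; (F2) F′ : X → X* is strongly continuous (it maps weakly convergent sequences to norm-convergent sequences), and if ψ lies in the closed convex hull of S_G := {ψ ∈ X : G(ψ) = 1} and ⟨F′(ψ), ψ⟩ = 0, then F(ψ) = 0; (F3) G′ : X → X* is continuous and bounded (maps bounded sets to bounded sets) and satisfies condition (S₀): if ψ_n ⇀ ψ weakly in X, G′(ψ_n) ⇀ v weakly in X*, and ⟨G′(ψ_n), ψ_n⟩ → ⟨v, ψ⟩, then ψ_n → ψ in norm; (F4) S_G is bounded, for every ψ ≠ 0 one has ⟨G′(ψ), ψ⟩ > 0 and G(tψ) → +∞ as t → +∞, and inf_{ψ ∈ S_G} ⟨G′(ψ), ψ⟩ > 0. For n ≥ 1 let A_n be the class of all compact symmetric subsets K of S_G with F(ψ) > 0 on K and genus γ(K) ≥ n, and set a_n = sup_{K ∈ A_n} inf_{ψ ∈ K} F(ψ) if A_n ≠ ∅ and a_n = 0 otherwise. Then a_1 < ∞, the sequence (a_n) is nonincreasing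 and nonnegative (a_1 ≥ a_2 ≥ ⋯ ≥ 0), and a_n → 0 as n → ∞. -/

import Mathlib

open Filter Topology

/-- The level set `S_G = {ψ : G ψ = 1}`. -/
def levelSG {X : Type*} [NormedAddCommGroup X] [NormedSpace ℝ X] (G : X → ℝ) : Set X :=
  {ψ : X | G ψ = 1}

/-- `GenusGe K n` says that the Krasnoselskii genus of `K` is at least `n`:
for no `k < n` does there exist a continuous odd map `K → ℝ^k ∖ {0}`. -/
def GenusGe {X : Type*} [NormedAddCommGroup X] [NormedSpace ℝ X]
    (K : Set X) (n : ℕ) : Prop :=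
  ∀ k : ℕ, k < n → ¬ ∃ g : X → (Fin k → ℝ),
    ContinuousOn g K ∧ (∀ x ∈ K, g (-x) = -g x) ∧ (∀ x ∈ K, g x ≠ 0)

/-- The class `A_n` of all compact symmetric subsets `K` of `S_G` on which
`F > 0` and with genus `γ(K) ≥ n`. -/
def LSFamily {X : Type*} [NormedAddCommGroup X] [NormedSpace ℝ X]
    (F G : X → ℝ) (n : ℕ) : Set (Set X) :=
  {K : Set X | K ⊆ levelSG G ∧ IsCompact K ∧ K = -K ∧ (∀ ψ ∈ K, 0 < F ψ) ∧ GenusGe K n}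

/-- The Ljusternik–Schnirelman levels `a_n = sup_{K ∈ A_n} inf_{ψ ∈ K} F ψ`
(equal to `0` when `A_n = ∅`, since `sSup ∅ = 0` in `ℝ`). -/
noncomputable def LSLevel {X : Type*} [NormedAddCommGroup X] [NormedSpace ℝ X]
    (F G : X → ℝ) (n : ℕ) : ℝ :=
  sSup ((fun K => sInf (F '' K)) '' LSFamily F G n)

/-
Since `F'` is strongly continuous, the mean value theorem makes `F` continuous along weakly
convergent sequences. Weakly compact sets are Fréchet–Urysohn for the weak topology
(Eberlein–Šmulian, by Whitley's argument: finitely many functionals norm a finite-dimensional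
subspace up to a factor `2`), so, `X` being reflexive, `F` is weakly continuous on bounded sets.
Hence `F` is bounded above on `S_G`, and for every `ε > 0` there are finitely many functionals whose
common zeros `ψ` in `S_G` satisfy `F ψ < ε`. A set of genus larger than the number of these
functionals contains a common zero, so the infimum of `F` over it is at most `ε`.
-/

section WeakTopology

variable {𝕜 X : Type*} [RCLike 𝕜] [NormedAddCommGroup X] [NormedSpace 𝕜 X]

theorem continuous_dual_comp_toWeakSpace_symm (f : StrongDual 𝕜 X) :
    Continuous fun z : WeakSpace 𝕜 X => f ((toWeakSpace 𝕜 X).symm z) :=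
  WeakBilin.eval_continuous (topDualPairing 𝕜 X).flip f

theorem exists_finset_forall_toWeakSpace_mem {x : X} {U : Set (WeakSpace 𝕜 X)}
    (hU : U ∈ 𝓝 (toWeakSpace 𝕜 X x)) :
    ∃ N : Finset (StrongDual 𝕜 X), ∀ y, (∀ f ∈ N, f y = f x) → toWeakSpace 𝕜 X y ∈ U := by
  have hnhds : 𝓝 (toWeakSpace 𝕜 X x) =
      comap (fun (z : WeakSpace 𝕜 X) (f : StrongDual 𝕜 X) => f ((toWeakSpace 𝕜 X).symm z))
        (Filter.pi fun f => 𝓝 (f x)) := by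
    rw [← nhds_pi]
    exact nhds_induced _ _
  rw [hnhds] at hU
  obtain ⟨V, hV, hVU⟩ := mem_comap.1 hU
  obtain ⟨I, hI, t, ht, htV⟩ := mem_pi.1 hV
  refine ⟨hI.toFinset, fun y hy => hVU (htV fun f hf => ?_)⟩
  simpa only [LinearEquiv.symm_apply_apply, hy f (hI.mem_toFinset.2 hf)]
    using mem_of_mem_nhds (ht f)

theorem exists_toWeakSpace_mem_forall_dist_lt {A : Set (WeakSpace 𝕜 X)} {x : X}
    (hx : toWeakSpace 𝕜 X x ∈ closure A) (N : Finset (StrongDual 𝕜 X)) {ε : ℝ} (hε : 0 < ε) :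
    ∃ a, toWeakSpace 𝕜 X a ∈ A ∧ ∀ f ∈ N, dist (f a) (f x) < ε := by
  have hnear : ∀ᶠ z in 𝓝 (toWeakSpace 𝕜 X x),
      ∀ f ∈ N, dist (f ((toWeakSpace 𝕜 X).symm z)) (f x) < ε :=
    (eventually_all_finset N).2 fun f _ => Metric.tendsto_nhds.1
      ((continuous_dual_comp_toWeakSpace_symm f).tendsto (toWeakSpace 𝕜 X x)) ε hε
  obtain ⟨z, hz, hzA⟩ := (mem_closure_iff_frequently.1 hx).and_eventually hnear |>.exists
  exact ⟨(toWeakSpace 𝕜 X).symm z, hz, hzA⟩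

theorem mem_closure_submodule_of_toWeakSpace_mem_closure {W : Submodule 𝕜 X} {y : X}
    (hy : toWeakSpace 𝕜 X y ∈ closure (toWeakSpace 𝕜 X '' W)) : y ∈ closure (W : Set X) := by
  let _ : NormedSpace ℝ X := NormedSpace.restrictScalars ℝ 𝕜 X
  have : IsScalarTower ℝ 𝕜 X := IsScalarTower.restrictScalars ℝ 𝕜 X
  have hW : Convex ℝ (W : Set X) := (W.restrictScalars ℝ).convex
  rwa [← hW.toWeakSpace_closure 𝕜, (toWeakSpace 𝕜 X).injective.mem_set_image] at hy

theorem isCompact_closure_toWeakSpace_image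
    (hrefl : Function.Surjective (NormedSpace.inclusionInDoubleDual 𝕜 X)) {S : Set X}
    (hS : Bornology.IsBounded S) : IsCompact (closure (toWeakSpace 𝕜 X '' S)) := by
  refine NormedSpace.isCompact_closure_of_isBounded 𝕜 X _ (by
    rwa [Set.preimage_image_eq _ (toWeakSpace 𝕜 X).injective]) fun ψ _ => ?_
  obtain ⟨x, hx⟩ := hrefl (WeakDual.toStrongDual ψ)
  exact ⟨toWeakSpace 𝕜 X x, DFunLike.ext _ _ fun f => DFunLike.congr_fun hx f⟩

theorem exists_norm_le_of_forall_dual {ι : Type*} {u : ι → X}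
    (hu : ∀ f : StrongDual 𝕜 X, ∃ C, ∀ i, ‖f (u i)‖ ≤ C) : ∃ C, ∀ i, ‖u i‖ ≤ C := by
  obtain ⟨C, hC⟩ :=
    banach_steinhaus (g := fun i => NormedSpace.inclusionInDoubleDual 𝕜 X (u i)) hu
  exact ⟨C, fun i =>
    ((NormedSpace.inclusionInDoubleDualLi (E := X) 𝕜).norm_map (u i)).symm.trans_le (hC i)⟩

end WeakTopology

section AngelicWeakTopology

variable {𝕜 X : Type*} [RCLike 𝕜] [NormedAddCommGroup X] [NormedSpace 𝕜 X]

/-- The set `D` of functionals norms `W` up to a factor `2`: the norm of every `x ∈ W` is at most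
twice the value at `x` of a functional in `D ∩ closedBall 0 1`. Any constant larger than `1` would
serve in place of `2`; it leaves room for a finite `D` when `W` is finite-dimensional. -/
def NormsOn (D : Set (StrongDual 𝕜 X)) (W : Set X) : Prop :=
  ∀ x ∈ W, ∃ f ∈ D, ‖f‖ ≤ 1 ∧ ‖x‖ ≤ 2 * ‖f x‖

theorem NormsOn.iUnion {ι : Sort*} {D : ι → Set (StrongDual 𝕜 X)} {W : ι → Set X}
    (h : ∀ i, NormsOn (D i) (W i)) : NormsOn (⋃ i, D i) (⋃ i, W i) := by
  intro x hx
  obtain ⟨i, hi⟩ := Set.mem_iUnion.1 hx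
  obtain ⟨f, hf, hfx⟩ := h i x hi
  exact ⟨f, Set.mem_iUnion_of_mem i hf, hfx⟩

theorem NormsOn.eq_zero_of_mem_closure {D : Set (StrongDual 𝕜 X)} {W : Set X} (h : NormsOn D W)
    {y : X} (hy : y ∈ closure W) (hDy : ∀ f ∈ D, f y = 0) : y = 0 := by
  refine norm_le_zero_iff.1 (le_of_forall_pos_lt_add fun ε hε => ?_)
  obtain ⟨z, hz, hyz⟩ := Metric.mem_closure_iff.1 hy (ε / 3) (by positivity)
  rw [dist_comm, dist_eq_norm] at hyz
  obtain ⟨f, hf, hf1, hfz⟩ := h z hz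
  have hz_le : ‖z‖ ≤ 2 * ‖z - y‖ := by
    calc ‖z‖ ≤ 2 * ‖f z‖ := hfz
      _ = 2 * ‖f (z - y)‖ := by rw [map_sub, hDy f hf, sub_zero]
      _ ≤ 2 * ‖z - y‖ := by grw [f.le_of_opNorm_le hf1, one_mul]
  have hy_le : ‖y‖ ≤ ‖z‖ + ‖z - y‖ := norm_le_insert z y
  linarith

theorem exists_finset_normsOn (V : Submodule 𝕜 X) [FiniteDimensional 𝕜 V] :
    ∃ N : Finset (StrongDual 𝕜 X), NormsOn (N : Set (StrongDual 𝕜 X)) (V : Set X) := by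
  classical
  have : ProperSpace V := FiniteDimensional.proper_rclike 𝕜 V
  obtain ⟨t, htV, ht, hcover⟩ := (isCompact_sphere (0 : V) 1).finite_cover_balls
    (e := 1 / 2) (by norm_num)
  choose f hf1 hf using fun v : V => exists_dual_vector'' 𝕜 (v : X)
  refine ⟨insert 0 (ht.toFinset.image f), fun x hx => ?_⟩
  obtain rfl | hx0 := eq_or_ne x 0
  · exact ⟨0, by simp⟩
  have hxpos : 0 < ‖x‖ := norm_pos_iff.2 hx0
  let u : V := (‖x‖⁻¹ : 𝕜) • ⟨x, hx⟩
  have hu : u ∈ Metric.sphere (0 : V) 1 := by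
    simp [u, norm_smul, hx0]
  obtain ⟨v, hv, huv⟩ := Set.mem_iUnion₂.1 (hcover hu)
  have hvu : ‖(v - u : X)‖ < 1 / 2 := mem_ball_iff_norm'.1 huv
  have hv1 : ‖(v : X)‖ = 1 := mem_sphere_zero_iff_norm.1 (htV hv)
  have hfvu : ‖f v (v - u)‖ ≤ 1 / 2 :=
    ((f v).le_of_opNorm_le (hf1 v) _).trans ((one_mul _).trans_le hvu.le)
  have hfu : 1 ≤ ‖f v u‖ + 1 / 2 := by
    calc 1 = ‖f v u + f v (v - u)‖ := by rw [← map_add, add_sub_cancel, hf, hv1]; simp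
      _ ≤ ‖f v u‖ + ‖f v (v - u)‖ := norm_add_le _ _
      _ ≤ ‖f v u‖ + 1 / 2 := by gcongr
  have hfx : ‖f v u‖ = ‖f v x‖ / ‖x‖ := by
    simp [u, div_eq_inv_mul]
  refine ⟨f v, Finset.mem_coe.2 (Finset.mem_insert_of_mem
    (Finset.mem_image_of_mem f (ht.mem_toFinset.2 hv))), hf1 v, ?_⟩
  have hhalf : 1 / 2 ≤ ‖f v x‖ / ‖x‖ := by linarith
  rw [le_div_iff₀ hxpos] at hhalf
  linarith

theorem exists_seq_tendsto_on_finset (N : Finset X → Finset (StrongDual 𝕜 X))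
    {A : Set (WeakSpace 𝕜 X)} {x : X} (hx : toWeakSpace 𝕜 X x ∈ closure A) :
    ∃ (s : ℕ → Finset X) (u : ℕ → X), Monotone s ∧ x ∈ s 0 ∧
      (∀ n, toWeakSpace 𝕜 X (u n) ∈ A ∧ u n ∈ s (n + 1)) ∧
      ∀ k, ∀ f ∈ N (s k), Tendsto (fun n => f (u n)) atTop (𝓝 (f x)) := by
  classical
  -- `N` need not be monotone: handling all subsets of `s` at stage `n` covers every `N (s k)` with
  -- `k ≤ n`.
  choose p hpA hp using fun (n : ℕ) (s : Finset X) =>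
    exists_toWeakSpace_mem_forall_dist_lt hx (s.powerset.biUnion N)
      (Nat.one_div_pos_of_nat (n := n))
  let s : ℕ → Finset X := fun n => Nat.rec {x} (fun n s => insert (p n s) s) n
  have hs : Monotone s := monotone_nat_of_le_succ fun n => Finset.subset_insert _ _
  refine ⟨s, fun n => p n (s n), hs, Finset.mem_singleton_self x,
    fun n => ⟨hpA n (s n), Finset.mem_insert_self _ _⟩, fun k f hf => ?_⟩
  refine tendsto_iff_dist_tendsto_zero.2 (squeeze_zero' (.of_forall fun _ => dist_nonneg) ?_
    tendsto_one_div_add_atTop_nhds_zero_nat)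
  filter_upwards [eventually_ge_atTop k] with n hn
  exact (hp n (s n) f (Finset.mem_biUnion.2 ⟨s k, Finset.mem_powerset.2 (hs hn), hf⟩)).le

theorem eq_of_mapClusterPt_of_tendsto {ι Y : Type*} [TopologicalSpace Y] [T2Space Y]
    {l : Filter ι} {u : ι → Y} {a b : Y} (ha : MapClusterPt a l u) (hb : Tendsto u l (𝓝 b)) :
    a = b :=
  eq_of_nhds_neBot (ClusterPt.mono ha hb)

theorem exists_seq_toWeakSpace_mapClusterPt_unique {A : Set (WeakSpace 𝕜 X)} {x : X}
    (hx : toWeakSpace 𝕜 X x ∈ closure A) :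
    ∃ u : ℕ → X, (∀ n, toWeakSpace 𝕜 X (u n) ∈ A) ∧
      ∀ y, MapClusterPt (toWeakSpace 𝕜 X y) atTop (fun n => toWeakSpace 𝕜 X (u n)) → y = x := by
  choose N hN using fun s : Finset X =>
    have := FiniteDimensional.span_finset 𝕜 s
    exists_finset_normsOn (Submodule.span 𝕜 (s : Set X))
  -- A cluster point `y` of `u` lies with `x` in the closed span of `⋃ k, s k`, and `f y = f x` for
  -- every `f` in a set norming this span.
  obtain ⟨s, u, hs, hxs, hu, hlim⟩ := exists_seq_tendsto_on_finset N hx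
  refine ⟨u, fun n => (hu n).1, fun y hy => sub_eq_zero.1 ?_⟩
  let V : ℕ →o Submodule 𝕜 X :=
    ⟨fun k => Submodule.span 𝕜 (s k : Set X), fun _ _ h => Submodule.span_mono (hs h)⟩
  have hsV {k : ℕ} {z : X} (hz : z ∈ s k) : z ∈ ⨆ k, V k :=
    Submodule.mem_iSup_of_mem k (Submodule.subset_span hz)
  have hnorms : NormsOn (⋃ k, (N (s k) : Set (StrongDual 𝕜 X)))
      ((⨆ k, V k : Submodule 𝕜 X) : Set X) := by
    rw [Submodule.coe_iSup_of_chain]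
    exact .iUnion fun k => hN (s k)
  have hyV : y ∈ (⨆ k, V k).topologicalClosure :=
    mem_closure_submodule_of_toWeakSpace_mem_closure <|
      mem_closure_iff_clusterPt.2 <| ClusterPt.mono hy <| tendsto_principal.2 <|
        .of_forall fun n => ⟨u n, hsV (hu n).2, rfl⟩
  have hxV : x ∈ (⨆ k, V k).topologicalClosure := subset_closure (hsV hxs)
  refine hnorms.eq_zero_of_mem_closure (sub_mem hyV hxV) fun f hf => ?_
  obtain ⟨k, hfk⟩ := Set.mem_iUnion.1 hf
  have hfy : MapClusterPt (f y) atTop (fun n => f (u n)) :=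
    MapClusterPt.tendsto_comp (f := fun z : WeakSpace 𝕜 X => f ((toWeakSpace 𝕜 X).symm z))
      ((continuous_dual_comp_toWeakSpace_symm f).tendsto (toWeakSpace 𝕜 X y)) hy
  rw [map_sub, sub_eq_zero]
  exact eq_of_mapClusterPt_of_tendsto hfy (hlim k f hfk)

theorem weakSpace_closure_subset_seqClosure {A : Set (WeakSpace 𝕜 X)}
    (hA : IsCompact (closure A)) : closure A ⊆ seqClosure A := by
  intro x hx
  obtain ⟨u, huA, hu⟩ := exists_seq_toWeakSpace_mapClusterPt_unique
    (x := (toWeakSpace 𝕜 X).symm x) hx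
  refine ⟨fun n => toWeakSpace 𝕜 X (u n), huA, hA.tendsto_nhds_of_unique_mapClusterPt
    (.of_forall fun n => subset_closure (huA n)) fun y _ hy => ?_⟩
  exact (toWeakSpace 𝕜 X).symm.injective (hu _ hy)

theorem weakSpace_frechetUrysohnSpace_of_isCompact {K : Set (WeakSpace 𝕜 X)} (hK : IsCompact K) :
    FrechetUrysohnSpace K := by
  refine ⟨fun s x hx => ?_⟩
  have hsK : closure ((↑) '' s : Set (WeakSpace 𝕜 X)) ⊆ K :=
    closure_minimal (Subtype.coe_image_subset K s) hK.isClosed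
  obtain ⟨u, hus, hux⟩ := weakSpace_closure_subset_seqClosure
    (hK.of_isClosed_subset isClosed_closure hsK) (closure_subtype.1 hx)
  choose v hvs hvu using hus
  exact ⟨v, hvs, tendsto_subtype_rng.2 (by simpa only [hvu] using hux)⟩

end AngelicWeakTopology

theorem tendsto_of_mem_segment {ι E : Type*} [AddCommGroup E] [Module ℝ E] [TopologicalSpace E]
    [LocallyConvexSpace ℝ E] {l : Filter ι} {x z : ι → E} {a : E} (hx : Tendsto x l (𝓝 a))
    (hz : ∀ i, z i ∈ segment ℝ a (x i)) : Tendsto z l (𝓝 a) :=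
  (LocallyConvexSpace.convex_basis (𝕜 := ℝ) a).tendsto_right_iff.2 fun _ hs =>
    (hx.eventually hs.1).mono fun i hi =>
      hs.2.segment_subset (mem_of_mem_nhds hs.1) hi (hz i)

section StronglyContinuous

variable {X Y : Type*} [NormedAddCommGroup X] [NormedSpace ℝ X] [TopologicalSpace Y]

/-- A map is strongly continuous if it sends weakly convergent sequences to convergent ones, the
limit being the value at the weak limit. This is hypothesis (F2) for `F'`; for real-valued maps it
is weak sequential continuity. -/
def StronglyContinuous (T : X → Y) : Prop :=
  ∀ (u : ℕ → X) (x : X), (∀ φ : X →L[ℝ] ℝ, Tendsto (fun n => φ (u n)) atTop (𝓝 (φ x))) →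
    Tendsto (fun n => T (u n)) atTop (𝓝 (T x))

namespace StronglyContinuous

theorem of_hasFDerivAt {F : X → ℝ} {F' : X → X →L[ℝ] ℝ} (hF : ∀ x, HasFDerivAt F (F' x) x)
    (hF' : StronglyContinuous F') : StronglyContinuous F := by
  intro u x hu
  choose z hz hmvt using fun n => domain_mvt (fun y _ => (hF y).hasFDerivWithinAt) convex_univ
    (Set.mem_univ x) (Set.mem_univ (u n))
  have hzx : Tendsto (fun n => F' (z n)) atTop (𝓝 (F' x)) := hF' z x fun φ =>
    tendsto_of_mem_segment (hu φ) fun n =>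
      image_segment ℝ φ.toLinearMap.toAffineMap x (u n) ▸ Set.mem_image_of_mem φ (hz n)
  obtain ⟨C, hC⟩ : ∃ C, ∀ n, ‖u n - x‖ ≤ C :=
    exists_norm_le_of_forall_dual (𝕜 := ℝ) fun φ => by
      simpa using (Metric.isBounded_range_of_tendsto _ ((hu φ).sub_const (φ x))).exists_norm_le
  have herr : Tendsto (fun n => (F' (z n) - F' x) (u n - x)) atTop (𝓝 0) := by
    refine squeeze_zero_norm (fun n => (F' (z n) - F' x).le_opNorm_of_le (hC n)) ?_
    simpa using (tendsto_iff_norm_sub_tendsto_zero.1 hzx).mul_const C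
  have hmain : Tendsto (fun n => F x + (F' (z n) - F' x) (u n - x) + (F' x (u n) - F' x x)) atTop
      (𝓝 (F x)) := by
    simpa using (herr.const_add (F x)).add ((hu (F' x)).sub_const (F' x x))
  refine hmain.congr fun n => ?_
  have := hmvt n
  simp only [sub_apply, map_sub] at this ⊢
  linarith

theorem continuousOn_comp_toWeakSpace_symm {T : X → Y} (hT : StronglyContinuous T)
    {K : Set (WeakSpace ℝ X)} (hK : IsCompact K) :
    ContinuousOn (fun z => T ((toWeakSpace ℝ X).symm z)) K := by
  have := weakSpace_frechetUrysohnSpace_of_isCompact hK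
  rw [continuousOn_iff_continuous_domRestrict]
  refine SeqContinuous.continuous fun u z hu => hT _ _ fun φ => ?_
  exact ((continuous_dual_comp_toWeakSpace_symm φ).comp continuous_subtype_val).tendsto z |>.comp hu

theorem exists_finset_forall_mem {T : X → Y} (hT : StronglyContinuous T)
    (hrefl : Function.Surjective (NormedSpace.inclusionInDoubleDual ℝ X)) {S : Set X}
    (hS : Bornology.IsBounded S) {x : X} {V : Set Y} (hV : V ∈ 𝓝 (T x)) :
    ∃ N : Finset (X →L[ℝ] ℝ), ∀ y ∈ S, (∀ φ ∈ N, φ y = φ x) → T y ∈ V := by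
  have hmem {y : X} (hy : y ∈ insert x S) :
      toWeakSpace ℝ X y ∈ closure (toWeakSpace ℝ X '' insert x S) :=
    subset_closure (Set.mem_image_of_mem _ hy)
  have hcont := hT.continuousOn_comp_toWeakSpace_symm
    (isCompact_closure_toWeakSpace_image hrefl (hS.insert x)) _ (hmem (Set.mem_insert x S))
  obtain ⟨U, hU, hUV⟩ := mem_nhdsWithin_iff_exists_mem_nhds_inter.1 (hcont hV)
  obtain ⟨N, hN⟩ := exists_finset_forall_toWeakSpace_mem hU
  exact ⟨N, fun y hyS hy => hUV ⟨hN y hy, hmem (Set.mem_insert_of_mem x hyS)⟩⟩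

theorem bddAbove_image {F : X → ℝ} (hF : StronglyContinuous F)
    (hrefl : Function.Surjective (NormedSpace.inclusionInDoubleDual ℝ X)) {S : Set X}
    (hS : Bornology.IsBounded S) : BddAbove (F '' S) := by
  have hK := isCompact_closure_toWeakSpace_image hrefl hS
  refine (hK.bddAbove_image (hF.continuousOn_comp_toWeakSpace_symm hK)).mono ?_
  rintro _ ⟨y, hy, rfl⟩
  exact ⟨toWeakSpace ℝ X y, subset_closure (Set.mem_image_of_mem _ hy), rfl⟩

end StronglyContinuous

end StronglyContinuous

section LSLevel

variable {X : Type*} [NormedAddCommGroup X] [NormedSpace ℝ X]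

theorem GenusGe.mono {K : Set X} {m n : ℕ} (hmn : m ≤ n) (h : GenusGe K n) : GenusGe K m :=
  fun k hk => h k (hk.trans_le hmn)

theorem GenusGe.exists_common_zero {K : Set X} {n : ℕ} (h : GenusGe K n)
    (N : Finset (X →L[ℝ] ℝ)) (hN : N.card < n) : ∃ x ∈ K, ∀ φ ∈ N, φ x = 0 := by
  by_contra! hne
  refine h N.card hN ⟨fun x i => (N.equivFin.symm i : X →L[ℝ] ℝ) x, ?_, ?_, ?_⟩
  · exact (continuous_pi fun i => ContinuousLinearMap.continuous _).continuousOn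
  · exact fun _ _ => funext fun _ => map_neg _ _
  · intro x hx hzero
    obtain ⟨φ, hφ, hφx⟩ := hne x hx
    exact hφx (by simpa using congrFun hzero (N.equivFin ⟨φ, hφ⟩))

theorem antitone_LSFamily (F G : X → ℝ) : Antitone (LSFamily F G) :=
  fun _ _ hmn _ ⟨hKG, hKc, hKsymm, hKF, hKgenus⟩ =>
    ⟨hKG, hKc, hKsymm, hKF, hKgenus.mono hmn⟩

theorem LSFamily.nonneg_of_mem_image {F G : X → ℝ} {n : ℕ} {K : Set X}
    (hK : K ∈ LSFamily F G n) : ∀ a ∈ F '' K, 0 ≤ a :=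
  Set.forall_mem_image.2 fun _ hx => (hK.2.2.2.1 _ hx).le

theorem LSLevel_nonneg (F G : X → ℝ) (n : ℕ) : 0 ≤ LSLevel F G n :=
  Real.sSup_nonneg <| Set.forall_mem_image.2 fun _ hK =>
    Real.sInf_nonneg (LSFamily.nonneg_of_mem_image hK)

theorem mem_upperBounds_sInf_image_LSFamily {F G : X → ℝ} {n : ℕ} {c : ℝ}
    {N : Finset (X →L[ℝ] ℝ)} (hN : N.card < n)
    (hc : ∀ x ∈ levelSG G, (∀ φ ∈ N, φ x = 0) → F x ≤ c) :
    c ∈ upperBounds ((fun K => sInf (F '' K)) '' LSFamily F G n) := by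
  rintro _ ⟨K, hK, rfl⟩
  obtain ⟨x, hxK, hx⟩ := hK.2.2.2.2.exists_common_zero N hN
  calc sInf (F '' K) ≤ F x :=
        csInf_le ⟨0, LSFamily.nonneg_of_mem_image hK⟩ (Set.mem_image_of_mem F hxK)
    _ ≤ c := hc x (hK.1 hxK) hx

theorem bddAbove_sInf_image_LSFamily {F G : X → ℝ} (hF : BddAbove (F '' levelSG G)) {n : ℕ}
    (hn : 1 ≤ n) : BddAbove ((fun K => sInf (F '' K)) '' LSFamily F G n) :=
  hF.imp fun _ hc => mem_upperBounds_sInf_image_LSFamily (N := ∅) hn fun _ hx _ =>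
    hc (Set.mem_image_of_mem F hx)

theorem LSLevel_le_LSLevel {F G : X → ℝ} (hF : BddAbove (F '' levelSG G)) {m n : ℕ} (hm : 1 ≤ m)
    (hmn : m ≤ n) : LSLevel F G n ≤ LSLevel F G m := by
  refine Real.sSup_le (fun a ha => ?_) (LSLevel_nonneg F G m)
  exact le_csSup (bddAbove_sInf_image_LSFamily hF hm)
    (Set.image_mono (antitone_LSFamily F G hmn) ha)

theorem tendsto_LSLevel_zero {F G : X → ℝ} (h : ∀ ε > 0, ∃ N : Finset (X →L[ℝ] ℝ),
    ∀ x ∈ levelSG G, (∀ φ ∈ N, φ x = 0) → F x < ε) :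
    Tendsto (fun n => LSLevel F G n) atTop (𝓝 0) := by
  refine Metric.nhds_basis_closedBall.tendsto_right_iff.2 fun ε hε => ?_
  obtain ⟨N, hN⟩ := h ε hε
  filter_upwards [eventually_gt_atTop N.card] with n hn
  have hle : LSLevel F G n ≤ ε :=
    Real.sSup_le (mem_upperBounds_sInf_image_LSFamily hn fun x hx h0 => (hN x hx h0).le) hε.le
  rwa [mem_closedBall_zero_iff, Real.norm_of_nonneg (LSLevel_nonneg F G n)]

end LSLevel

theorem stmt15_general {X : Type*} [NormedAddCommGroup X] [NormedSpace ℝ X]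
    (hrefl : Function.Surjective (NormedSpace.inclusionInDoubleDual ℝ X))
    (F G : X → ℝ) (hF : StronglyContinuous F) (hF0 : F 0 = 0)
    (hSGbdd : Bornology.IsBounded (levelSG G)) :
    BddAbove ((fun K => sInf (F '' K)) '' LSFamily F G 1) ∧
    (∀ n : ℕ, 1 ≤ n → LSLevel F G (n + 1) ≤ LSLevel F G n) ∧
    (∀ n : ℕ, 1 ≤ n → 0 ≤ LSLevel F G n) ∧
    Tendsto (fun n => LSLevel F G n) atTop (𝓝 0) := by
  have hbdd : BddAbove (F '' levelSG G) := hF.bddAbove_image hrefl hSGbdd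
  refine ⟨bddAbove_sInf_image_LSFamily hbdd le_rfl,
    fun n hn => LSLevel_le_LSLevel hbdd hn n.le_succ, fun n _ => LSLevel_nonneg F G n,
    tendsto_LSLevel_zero fun ε hε => ?_⟩
  have hε0 : Set.Iio ε ∈ 𝓝 (F 0) := Iio_mem_nhds (hF0.trans_lt hε)
  simpa only [map_zero, Set.mem_Iio] using hF.exists_finset_forall_mem hrefl hSGbdd hε0

/-- Ljusternik–Schnirelman principle, behaviour of the critical levels
(conclusion (3) of Theorem 2.5 of the paper): under (F1)–(F4), `a_1 < ∞`
(i.e. the defining set of `a_1` is bounded above), the sequence `(a_n)` is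
nonincreasing and nonnegative, and `a_n → 0`. -/
theorem stmt15 {X : Type*} [NormedAddCommGroup X] [NormedSpace ℝ X] [CompleteSpace X]
    (hrefl : Function.Surjective (NormedSpace.inclusionInDoubleDual ℝ X))
    (F G : X → ℝ) (F' G' : X → X →L[ℝ] ℝ)
    -- (F1)
    (hFeven : ∀ ψ : X, F (-ψ) = F ψ) (hGeven : ∀ ψ : X, G (-ψ) = G ψ)
    (hFderiv : ∀ ψ, HasFDerivAt F (F' ψ) ψ) (hFcont : Continuous F')
    (hGderiv : ∀ ψ, HasFDerivAt G (G' ψ) ψ)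
    (hF0 : F 0 = 0) (hG0 : G 0 = 0)
    -- (F2): F' is strongly continuous
    (hFsc : ∀ (ψ : ℕ → X) (ψ₀ : X),
      (∀ φ : X →L[ℝ] ℝ, Tendsto (fun n => φ (ψ n)) atTop (𝓝 (φ ψ₀))) →
      Tendsto (fun n => F' (ψ n)) atTop (𝓝 (F' ψ₀)))
    (hF2 : ∀ ψ ∈ closure (convexHull ℝ (levelSG G)), F' ψ ψ = 0 → F ψ = 0)
    -- (F3): G' is continuous, bounded and satisfies condition (S₀)
    (hGcont : Continuous G')
    (hGbdd : ∀ s : Set X, Bornology.IsBounded s →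
      Bornology.IsBounded ((fun ψ => G' ψ) '' s))
    (hS0 : ∀ (ψ : ℕ → X) (ψ₀ : X) (v : X →L[ℝ] ℝ),
      (∀ φ : X →L[ℝ] ℝ, Tendsto (fun n => φ (ψ n)) atTop (𝓝 (φ ψ₀))) →
      (∀ x : X, Tendsto (fun n => G' (ψ n) x) atTop (𝓝 (v x))) →
      Tendsto (fun n => G' (ψ n) (ψ n)) atTop (𝓝 (v ψ₀)) →
      Tendsto ψ atTop (𝓝 ψ₀))
    -- (F4)
    (hSGbdd : Bornology.IsBounded (levelSG G))
    (hGpos : ∀ ψ : X, ψ ≠ 0 → 0 < G' ψ ψ)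
    (hGinfty : ∀ ψ : X, ψ ≠ 0 → Tendsto (fun t : ℝ => G (t • ψ)) atTop atTop)
    (hGinf : ∃ δ : ℝ, 0 < δ ∧ ∀ ψ ∈ levelSG G, δ ≤ G' ψ ψ) :
    BddAbove ((fun K => sInf (F '' K)) '' LSFamily F G 1) ∧
    (∀ n : ℕ, 1 ≤ n → LSLevel F G (n + 1) ≤ LSLevel F G n) ∧
    (∀ n : ℕ, 1 ≤ n → 0 ≤ LSLevel F G n) ∧
    Tendsto (fun n => LSLevel F G n) atTop (𝓝 0) :=
  stmt15_general hrefl F G (.of_hasFDerivAt hFderiv hFsc) hF0 hSGbdd
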